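/- There is no countable totally ordered group U such that every countable totally ordered abelian group admits an order-embedding into U. In particular, there is no universal countable totally ordered group. -/

import Mathlib

noncomputable def dHom (x : ℝ) : ℤ × ℤ →+ ℝ :=
  AddMonoidHom.coprod (zmultiplesHom ℝ 1) (zmultiplesHom ℝ x)

theorem exists_pair (U : Type) [Group U] [LinearOrder U]
    (h : ∀ (G : Type) [CommGroup G] [LinearOrder G],
        (∀ a b c : G, a ≤ b → a * c ≤ b * c) → Countable G →
        ∃ f : G →* U, Function.Injective f ∧ StrictMono f) (x : ℝ) :
    ∃ u : U × U, ∀ p q : ℤ, (q * x < p → u.2 ^ q < u.1 ^ p) ∧ (p < q * x → u.1 ^ p < u.2 ^ q) := by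
  have hc : Countable (dHom x).range :=
    (dHom x).rangeRestrict_surjective.countable
  obtain ⟨f, -, hf⟩ := h (Multiplicative (dHom x).range)
    (fun a b c hab => mul_le_mul_left hab c)
    (inferInstanceAs (Countable (dHom x).range))
  let a : (dHom x).range := ⟨1, (1, 0), by simp [dHom]⟩
  let b : (dHom x).range := ⟨x, (0, 1), by simp [dHom]⟩
  refine ⟨(f (Multiplicative.ofAdd a), f (Multiplicative.ofAdd b)), fun p q => ⟨fun hl => ?_, fun hl => ?_⟩⟩
  · simp only [← map_zpow, ← ofAdd_zsmul]
    apply hf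
    rw [Multiplicative.ofAdd_lt, ← Subtype.coe_lt_coe]
    simpa [a, b] using hl
  · simp only [← map_zpow, ← ofAdd_zsmul]
    apply hf
    rw [Multiplicative.ofAdd_lt, ← Subtype.coe_lt_coe]
    simpa [a, b] using hl

/-- There is no countable totally ordered group `U` such that every countable
totally ordered abelian group order-embeds into `U`. -/
theorem no_universal_countable_ordered_group
    (U : Type) [Group U] [LinearOrder U]
    (hU : ∀ a b c d : U, a ≤ b → c * a * d ≤ c * b * d) (hUc : Countable U) :
    ¬ (∀ (G : Type) [CommGroup G] [LinearOrder G],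
        (∀ a b c : G, a ≤ b → a * c ≤ b * c) → Countable G →
        ∃ f : G →* U, Function.Injective f ∧ StrictMono f) := by
  intro h
  choose u hu using exists_pair U h
  have key : ∀ x y : ℝ, x < y → u x ≠ u y := by
    intro x y hxy he
    obtain ⟨r, h1, h2⟩ := exists_rat_btwn hxy
    have hd : (0 : ℝ) < r.den := by exact_mod_cast r.den_pos
    rw [Rat.cast_def, lt_div_iff₀ hd] at h1
    rw [Rat.cast_def, div_lt_iff₀ hd] at h2
    have k1 := (hu x r.num r.den).1 (by push_cast; linarith)
    have k2 := (hu y r.num r.den).2 (by push_cast; linarith)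
    rw [he] at k1
    exact lt_asymm k1 k2
  have hinj : Function.Injective u := by
    intro x y he
    rcases lt_trichotomy x y with hl | hl | hl
    · exact absurd he (key x y hl)
    · exact hl
    · exact absurd he.symm (key y x hl)
  have : Countable ℝ := hinj.countable
  exact not_countable (α := ℝ) this
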